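/- Let S be a finite nonempty set, P : S × S → [0,1] normal (sup_{t ∈ S} P(s,t) = 1 for every s), a, b : S → [0,1], and u ∈ [0,1]. Define PoU(s) := sup_{j ∈ ℕ} [ sup over all finite sequences t₀ = s, t₁, …, t_j in S of min( min_{0 ≤ k < j} min( a(t_k), P(t_k, t_{k+1}) ), b(t_j) ) ]. Then PoU(s) ≥ u if and only if there exist j ∈ ℕ and a finite sequence t₀ = s, t₁, …, t_j in S such that a(t_k) ≥ u and P(t_k, t_{k+1}) ≥ u for all 0 ≤ k < j, and b(t_j) ≥ u. -/

import Mathlib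

/-- `[0,1]` as a complete lattice. -/
instance : Fact ((0:ℝ) ≤ 1) := ⟨zero_le_one⟩

/-- The value of a run `σ`: `inf_{i ≥ 0} P(σ i, σ (i+1))`. -/
noncomputable def valP {S : Type*} (P : S → S → unitInterval) (σ : ℕ → S) : unitInterval :=
  ⨅ i : ℕ, P (σ i) (σ (i + 1))

/-- `r_P(s)`: the supremum of the values of all runs starting at `s`. -/
noncomputable def rP {S : Type*} (P : S → S → unitInterval) (s : S) : unitInterval :=
  ⨆ σ : {σ : ℕ → S // σ 0 = s}, valP P σ.1

/-- `PoU(s) = Po(s ⊨ Φ′ ⊔ Φ″)` for a normal `P`: the sup over `j ∈ ℕ` and finite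
sequences `t₀ = s, …, t_j` of `min( min_{0≤k<j} min(a(t_k), P(t_k, t_{k+1})), b(t_j) )`. -/
noncomputable def PoUntil {S : Type*} (P : S → S → unitInterval)
    (a b : S → unitInterval) (s : S) : unitInterval :=
  ⨆ j : ℕ, ⨆ t : {t : Fin (j + 1) → S // t 0 = s},
    min (⨅ k : Fin j, min (a (t.1 k.castSucc)) (P (t.1 k.castSucc) (t.1 k.succ)))
      (b (t.1 (Fin.last j)))

/-!
The forward implication needs the supremum to be attained, although it ranges over infinitely many
paths. The value of a path is a minimum of finitely many entries, so it is itself one of these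
entries. When the entries contain no strictly increasing sequence, for instance because there are
finitely many states, the path values therefore have a greatest element.
-/

theorem exists_isGreatest_of_wellFoundedOn_gt {L : Type*} [LinearOrder L] {A : Set L}
    (hA : A.WellFoundedOn (· > ·)) (hne : A.Nonempty) : ∃ m, IsGreatest A m := by
  have : Nonempty A := hne.to_subtype
  obtain ⟨m, -, hm⟩ := WellFounded.has_min hA Set.univ Set.univ_nonempty
  exact ⟨m, m.2, fun x hx => not_lt.1 (hm ⟨x, hx⟩ (Set.mem_univ _))⟩

theorem le_ciSup_iff_exists_le_of_wellFoundedOn_gt {ι L : Type*} [Nonempty ι]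
    [ConditionallyCompleteLinearOrder L] {f : ι → L} (hf : (Set.range f).WellFoundedOn (· > ·))
    {u : L} : u ≤ ⨆ i, f i ↔ ∃ i, u ≤ f i := by
  obtain ⟨_, ⟨i, rfl⟩, hi⟩ := exists_isGreatest_of_wellFoundedOn_gt hf (Set.range_nonempty f)
  exact ⟨fun hu => ⟨i, hu.trans (ciSup_le fun j => hi ⟨j, rfl⟩)⟩,
    fun ⟨j, hj⟩ => hj.trans (le_ciSup ⟨f i, hi⟩ j)⟩

theorem iInf_mem_insert_top_range {ι L : Type*} [Finite ι] [CompleteLinearOrder L] (f : ι → L) :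
    ⨅ i, f i ∈ insert ⊤ (Set.range f) := by
  cases isEmpty_or_nonempty ι with
  | inl _ => exact Or.inl (iInf_of_empty f)
  | inr _ => exact Or.inr exists_eq_ciInf_of_finite

section PathValue

variable {S L : Type*} [CompleteLinearOrder L] (w : S → S → L) (b : S → L)

/-- The possibility of the finite path `t` as a witness of an until formula. The weight `w x y` of a
step stands for `min (a x) (P x y)`, where `a` and `P` are as in `PoUntil`. -/
def pathValue {j : ℕ} (t : Fin (j + 1) → S) : L :=
  min (⨅ k : Fin j, w (t k.castSucc) (t k.succ)) (b (t (Fin.last j)))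

theorem le_pathValue_iff {j : ℕ} (t : Fin (j + 1) → S) {u : L} :
    u ≤ pathValue w b t ↔
      (∀ k : Fin j, u ≤ w (t k.castSucc) (t k.succ)) ∧ u ≤ b (t (Fin.last j)) := by
  rw [pathValue, le_min_iff, le_iInf_iff]

theorem pathValue_mem {j : ℕ} (t : Fin (j + 1) → S) :
    pathValue w b t ∈ insert ⊤ (Set.range ↿w) ∪ Set.range b := by
  have hsteps : Set.range (fun k : Fin j => w (t k.castSucc) (t k.succ)) ⊆ Set.range ↿w :=
    Set.range_subset_iff.2 fun k => ⟨(t k.castSucc, t k.succ), rfl⟩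
  rcases min_choice (⨅ k : Fin j, w (t k.castSucc) (t k.succ)) (b (t (Fin.last j))) with h | h <;>
    rw [pathValue, h]
  · exact Or.inl (Set.insert_subset_insert hsteps (iInf_mem_insert_top_range _))
  · exact Or.inr (Set.mem_range_self _)

end PathValue

theorem until_threshold_ge_general {S L : Type*} [CompleteLinearOrder L] {w : S → S → L} {b : S → L}
    (hw : (Set.range ↿w).WellFoundedOn (· > ·)) (hb : (Set.range b).WellFoundedOn (· > ·))
    (u : L) (s : S) :
    u ≤ ⨆ j : ℕ, ⨆ t : {t : Fin (j + 1) → S // t 0 = s}, pathValue w b t.1 ↔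
      ∃ (j : ℕ) (t : Fin (j + 1) → S), t 0 = s ∧
        (∀ k : Fin j, u ≤ w (t k.castSucc) (t k.succ)) ∧ u ≤ b (t (Fin.last j)) := by
  let value (p : Σ j : ℕ, {t : Fin (j + 1) → S // t 0 = s}) : L := pathValue w b p.2.1
  have hvalue : (Set.range value).WellFoundedOn (· > ·) :=
    ((hw.insert ⊤).union hb).subset (Set.range_subset_iff.2 fun p => pathValue_mem w b p.2.1)
  have : Nonempty (Σ j : ℕ, {t : Fin (j + 1) → S // t 0 = s}) := ⟨0, fun _ => s, rfl⟩
  calc u ≤ ⨆ j : ℕ, ⨆ t : {t : Fin (j + 1) → S // t 0 = s}, pathValue w b t.1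
    _ ↔ u ≤ ⨆ p, value p := by rw [iSup_sigma]
    _ ↔ ∃ p, u ≤ value p := le_ciSup_iff_exists_le_of_wellFoundedOn_gt hvalue
    _ ↔ _ := by simp only [value, Sigma.exists, Subtype.exists, exists_prop, le_pathValue_iff]

theorem PoUntil_eq_iSup_pathValue {S : Type*} (P : S → S → unitInterval) (a b : S → unitInterval)
    (s : S) :
    PoUntil P a b s = ⨆ j : ℕ, ⨆ t : {t : Fin (j + 1) → S // t 0 = s},
      pathValue (fun x y => min (a x) (P x y)) b t.1 :=
  rfl

/-- For normal `P`: `PoU(s) ≥ u` iff some finite sequence `t₀ = s, …, t_j` satisfies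
`a(t_k) ≥ u` and `P(t_k, t_{k+1}) ≥ u` for all `k < j`, and `b(t_j) ≥ u`. -/
theorem until_threshold_ge {S : Type*} [Fintype S] [Nonempty S]
    (P : S → S → unitInterval) (hP : ∀ s : S, (⨆ t : S, P s t) = 1)
    (a b : S → unitInterval) (u : unitInterval) (s : S) :
    u ≤ PoUntil P a b s ↔
      ∃ (j : ℕ) (t : Fin (j + 1) → S), t 0 = s ∧
        (∀ k : Fin j, u ≤ a (t k.castSucc) ∧ u ≤ P (t k.castSucc) (t k.succ)) ∧
        u ≤ b (t (Fin.last j)) := by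
  rw [PoUntil_eq_iSup_pathValue, until_threshold_ge_general (Set.finite_range _).wellFoundedOn
    (Set.finite_range b).wellFoundedOn]
  simp only [le_min_iff]
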